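/- Suppose the discount function satisfies δ(i)δ(j) ≤ δ(i+j) for all i,j ∈ ℕ, f is lower semicontinuous, and the transition kernel Q is lower semicontinuous under the weak star topology, i.e. for every bounded Borel measurable g : 𝕏 → ℝ and every sequence x_n → x in 𝕏, liminf_{n→∞} ∫_𝕏 g(y) Q(x_n, dy) ≥ ∫_𝕏 g(y) Q(x, dy). Then S* := ∩_{S∈ℰ} S is the optimal equilibrium: S* ∈ ℰ and V(x,S*) ≥ V(x,S) for every S ∈ ℰ and every x ∈ 𝕏. -/

import Mathlib

/-!
The proof is of Knaster–Tarski type. Call a Borel set `T` *improving* if `Θ(T) ⊆ T`, and let `U`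
be the intersection of all improving sets. Everything rests on a comparison principle
(`valJ_le_of_family`): if `U` is contained in all sets of a family and, at each point outside `U`,
some set of the family makes waiting strictly better than stopping, then `J(·, U)` dominates
`J(·, S)` for every `S` in the family. Indeed, a strategy that stops at a point outside `U` can be
improved by continuing, log-superadditivity of `δ` ensuring that the time already elapsed does not
spoil the improvement; each such step takes at least one unit of time, so what remains to be
compared is discounted by `δ (t + k) → 0`. The formal induction uses only the first-step formula
`valJ_eq_integral_nextVal`, which follows from the Markov property at time one, `map_pathShift`.

Applied to the family `{T}`, the principle gives `J(·, T) ≤ J(·, Θ(T))` for improving `T`, so that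
`Θ(T)` is improving again. Hence `U` is also the intersection of the sets `Θ(T)`, the set where
`f ≥ J(·, T)` for all improving `T`. By first-step analysis each `J(·, T)` is `Q g` for a bounded
Borel `g`, hence lower semicontinuous, and so `U` is Borel although the intersection may be
uncountable (`measurableSet_setOf_forall_le`). Applied to the family of all improving sets, the
principle gives `J(·, T) ≤ J(·, U)` for them, so `Θ(U) ⊆ U`. Thus `U`, and with it `Θ(U)`, is
improving, whence `U ⊆ Θ(U)` by minimality. So `U` is an equilibrium; equilibria being improving,
it is the smallest one, and it dominates all others.
-/

open MeasureTheory ProbabilityTheory Set Filter Topology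
open scoped ENNReal ENat

noncomputable section

/-- The σ-algebra generated by the first `n+1` coordinates of the path space:
the natural filtration of the coordinate process at time `n`. -/
def pathSigma (𝕏 : Type*) [m : MeasurableSpace 𝕏] (n : ℕ) : MeasurableSpace (ℕ → 𝕏) :=
  ⨆ i ∈ Finset.range (n + 1), MeasurableSpace.comap (fun ω : ℕ → 𝕏 => ω i) m

/-- `Pr` is the family of laws of the time-homogeneous Markov chain with one-step
transition kernel `Q`: under `Pr x` the chain starts at `x`, and the Markov property
`Pr^x(X_{n+1} ∈ A | 𝓕_n) = Q(X_n, A)` holds. -/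
structure IsMarkovChainLaw {𝕏 : Type*} [MeasurableSpace 𝕏]
    (Pr : Kernel 𝕏 (ℕ → 𝕏)) (Q : Kernel 𝕏 𝕏) : Prop where
  start : ∀ x : 𝕏, Pr x {ω | ω 0 = x} = 1
  markov : ∀ (x : 𝕏) (n : ℕ) (B : Set (ℕ → 𝕏)), MeasurableSet[pathSigma 𝕏 n] B →
    ∀ A : Set 𝕏, MeasurableSet A →
      Pr x (B ∩ {ω | ω (n + 1) ∈ A}) = ∫⁻ ω in B, Q (ω n) A ∂(Pr x)

/-- The first hitting time `ρ(x,S) = inf {t ≥ 1 : X_t ∈ S}` along the path `ω`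
(equal to `⊤` if `S` is never reached at a time `≥ 1`). -/
def hitTime {𝕏 : Type*} (S : Set 𝕏) (ω : ℕ → 𝕏) : ℕ∞ :=
  sInf {n : ℕ∞ | ∃ t : ℕ, n = (t : ℕ∞) ∧ 1 ≤ t ∧ ω t ∈ S}

/-- The discounted payoff `δ(ρ(x,S)) f(X_{ρ(x,S)})` collected along the path `ω`,
with the convention that it vanishes when `S` is never hit. -/
def stopPayoff {𝕏 : Type*} (δ : ℕ → ℝ) (f : 𝕏 → ℝ) (S : Set 𝕏) (ω : ℕ → 𝕏) : ℝ :=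
  if hitTime S ω = ⊤ then 0
  else δ (hitTime S ω).toNat * f (ω (hitTime S ω).toNat)

/-- The objective value `J(x, ρ(x,S)) = 𝔼^x[δ(ρ(x,S)) f(X_{ρ(x,S)})]`. -/
def valJ {𝕏 : Type*} [MeasurableSpace 𝕏] (Pr : Kernel 𝕏 (ℕ → 𝕏)) (δ : ℕ → ℝ) (f : 𝕏 → ℝ)
    (S : Set 𝕏) (x : 𝕏) : ℝ :=
  ∫ ω, stopPayoff δ f S ω ∂(Pr x)

/-- The operator `Θ(S) = {x ∈ 𝕏 : f(x) ≥ J(x, ρ(x,S))}`. -/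
def Θ {𝕏 : Type*} [MeasurableSpace 𝕏] (Pr : Kernel 𝕏 (ℕ → 𝕏)) (δ : ℕ → ℝ) (f : 𝕏 → ℝ)
    (S : Set 𝕏) : Set 𝕏 :=
  {x | valJ Pr δ f S x ≤ f x}

/-- A Borel set `S ⊆ 𝕏` is an equilibrium if `Θ(S) = S`. -/
def IsEquilibrium {𝕏 : Type*} [MeasurableSpace 𝕏] (Pr : Kernel 𝕏 (ℕ → 𝕏)) (δ : ℕ → ℝ)
    (f : 𝕏 → ℝ) (S : Set 𝕏) : Prop :=
  MeasurableSet S ∧ Θ Pr δ f S = S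

/-- The value `V(x,S) = max (f x) (J(x, ρ(x,S)))` associated with an equilibrium `S`. -/
def valV {𝕏 : Type*} [MeasurableSpace 𝕏] (Pr : Kernel 𝕏 (ℕ → 𝕏)) (δ : ℕ → ℝ) (f : 𝕏 → ℝ)
    (S : Set 𝕏) (x : 𝕏) : ℝ :=
  max (f x) (valJ Pr δ f S x)

/-! ### The Markov property for the shifted path -/

section MarkovShift

variable {𝕏 : Type*} [MeasurableSpace 𝕏]

/-- The time shift `(ω₀, ω₁, …) ↦ (ω₁, ω₂, …)` on path space. -/
def pathShift (ω : ℕ → 𝕏) : ℕ → 𝕏 := fun n => ω (n + 1)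

lemma measurable_pathShift : Measurable (pathShift : (ℕ → 𝕏) → ℕ → 𝕏) :=
  measurable_pi_lambda _ fun n => measurable_pi_apply (n + 1)

lemma pathSigma_mono : Monotone (pathSigma 𝕏) := fun m n h =>
  biSup_mono fun i hi => by
    simp only [Finset.mem_range] at hi ⊢
    omega

lemma comap_le_pathSigma {i n : ℕ} (h : i ≤ n) :
    MeasurableSpace.comap (fun ω : ℕ → 𝕏 => ω i) inferInstance ≤ pathSigma 𝕏 n :=
  le_biSup (fun i => MeasurableSpace.comap (fun ω : ℕ → 𝕏 => ω i) inferInstance)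
    (Finset.mem_range.2 (Nat.lt_succ_of_le h))

lemma measurable_coord_pathSigma {i n : ℕ} (h : i ≤ n) :
    Measurable[pathSigma 𝕏 n] (fun ω : ℕ → 𝕏 => ω i) :=
  measurable_iff_comap_le.2 (comap_le_pathSigma h)

lemma pathSigma_le (n : ℕ) : pathSigma 𝕏 n ≤ MeasurableSpace.pi :=
  iSup₂_le fun i _ => (measurable_pi_apply i).comap_le

lemma iSup_pathSigma : ⨆ n, pathSigma 𝕏 n = MeasurableSpace.pi :=
  le_antisymm (iSup_le pathSigma_le)
    (iSup_le fun i => (comap_le_pathSigma le_rfl).trans (le_iSup (pathSigma 𝕏) i))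

lemma pathSigma_zero :
    pathSigma 𝕏 0 = MeasurableSpace.comap (fun ω : ℕ → 𝕏 => ω 0) inferInstance := by
  simp [pathSigma]

lemma pathSigma_succ (n : ℕ) :
    pathSigma 𝕏 (n + 1) = pathSigma 𝕏 n ⊔
      MeasurableSpace.comap (fun ω : ℕ → 𝕏 => ω (n + 1)) inferInstance := by
  rw [pathSigma, Finset.range_add_one, Finset.iSup_insert, sup_comm]
  rfl

/-- The sets `B ∩ {X_{n+1} ∈ A}` with `B` in the past of time `n`: the π-system generating
the `(n+1)`-st σ-algebra of the filtration. -/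
def cylSucc (𝕏 : Type*) [MeasurableSpace 𝕏] (n : ℕ) : Set (Set (ℕ → 𝕏)) :=
  {C | ∃ B, MeasurableSet[pathSigma 𝕏 n] B ∧ ∃ A : Set 𝕏, MeasurableSet A ∧
    C = B ∩ {ω | ω (n + 1) ∈ A}}

lemma isPiSystem_cylSucc (n : ℕ) : IsPiSystem (cylSucc 𝕏 n) := by
  rintro _ ⟨B, hB, A, hA, rfl⟩ _ ⟨B', hB', A', hA', rfl⟩ -
  refine ⟨B ∩ B', hB.inter hB', A ∩ A', hA.inter hA', ?_⟩
  ext ω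
  simp only [mem_inter_iff, mem_ofPred_eq]
  tauto

lemma generateFrom_cylSucc (n : ℕ) :
    pathSigma 𝕏 (n + 1) = MeasurableSpace.generateFrom (cylSucc 𝕏 n) := by
  apply le_antisymm
  · rw [pathSigma_succ]
    refine sup_le (fun B hB => ?_) ?_
    · exact MeasurableSpace.measurableSet_generateFrom ⟨B, hB, univ, MeasurableSet.univ, by simp⟩
    · rintro _ ⟨A, hA, rfl⟩
      exact MeasurableSpace.measurableSet_generateFrom
        ⟨univ, MeasurableSet.univ, A, hA, by ext; simp⟩
  · refine MeasurableSpace.generateFrom_le ?_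
    rintro _ ⟨B, hB, A, hA, rfl⟩
    exact (pathSigma_mono (Nat.le_succ n) _ hB).inter (measurable_coord_pathSigma le_rfl hA)

/-- A law on path space is determined by its initial distribution and the Markov property
with transition kernel `Q`. -/
lemma markov_law_unique (Q : Kernel 𝕏 𝕏) (μ ν : Measure (ℕ → 𝕏))
    [IsProbabilityMeasure μ] [IsProbabilityMeasure ν]
    (h0 : ∀ A : Set 𝕏, MeasurableSet A → μ {ω | ω 0 ∈ A} = ν {ω | ω 0 ∈ A})
    (hμ : ∀ (n : ℕ) (B : Set (ℕ → 𝕏)), MeasurableSet[pathSigma 𝕏 n] B →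
      ∀ A : Set 𝕏, MeasurableSet A →
        μ (B ∩ {ω | ω (n + 1) ∈ A}) = ∫⁻ ω in B, Q (ω n) A ∂μ)
    (hν : ∀ (n : ℕ) (B : Set (ℕ → 𝕏)), MeasurableSet[pathSigma 𝕏 n] B →
      ∀ A : Set 𝕏, MeasurableSet A →
        ν (B ∩ {ω | ω (n + 1) ∈ A}) = ∫⁻ ω in B, Q (ω n) A ∂ν) :
    μ = ν := by
  have key : ∀ n, μ.trim (pathSigma_le n) = ν.trim (pathSigma_le n) := by
    intro n
    induction n with
    | zero =>
      refine @Measure.ext _ (pathSigma 𝕏 0) _ _ fun B hB => ?_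
      rw [trim_measurableSet_eq _ hB, trim_measurableSet_eq _ hB]
      rw [pathSigma_zero] at hB
      obtain ⟨A, hA, rfl⟩ := hB
      exact h0 A hA
    | succ n ih =>
      refine @ext_of_generate_finite _ (pathSigma 𝕏 (n + 1)) _ _ (cylSucc 𝕏 n)
        (generateFrom_cylSucc n) (isPiSystem_cylSucc n) _ ?_ ?_
      · intro C hC
        have hCm : MeasurableSet[pathSigma 𝕏 (n + 1)] C := by
          rw [generateFrom_cylSucc]
          exact MeasurableSpace.measurableSet_generateFrom hC
        rw [trim_measurableSet_eq _ hCm, trim_measurableSet_eq _ hCm]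
        obtain ⟨B, hB, A, hA, rfl⟩ := hC
        rw [hμ n B hB A hA, hν n B hB A hA, ← lintegral_indicator (pathSigma_le n _ hB),
          ← lintegral_indicator (pathSigma_le n _ hB)]
        have hg : Measurable[pathSigma 𝕏 n] (B.indicator fun ω : ℕ → 𝕏 => Q (ω n) A) :=
          Measurable.indicator
            ((Kernel.measurable_coe Q hA).comp (measurable_coord_pathSigma le_rfl)) hB
        rw [← lintegral_trim (pathSigma_le n) hg, ← lintegral_trim (pathSigma_le n) hg, ih]
      · rw [trim_measurableSet_eq _ MeasurableSet.univ, trim_measurableSet_eq _ MeasurableSet.univ]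
        simp
  refine ext_of_generate_finite (⋃ n, {s | MeasurableSet[pathSigma 𝕏 n] s}) ?_ ?_ ?_ (by simp)
  · rw [← iSup_pathSigma, MeasurableSpace.measurableSpace_iSup_eq]
    congr 1
    ext s
    simp
  · exact isPiSystem_iUnion_of_monotone _
      (fun n => @MeasurableSpace.isPiSystem_measurableSet _ (pathSigma 𝕏 n))
      fun m n h s hs => pathSigma_mono h s hs
  · intro s hs
    obtain ⟨n, hn⟩ := mem_iUnion.1 hs
    replace hn : MeasurableSet[pathSigma 𝕏 n] s := hn
    have := congrArg (fun m => m s) (key n)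
    simpa only [trim_measurableSet_eq _ hn] using this

variable {Pr : Kernel 𝕏 (ℕ → 𝕏)} [IsMarkovKernel Pr] {Q : Kernel 𝕏 𝕏} [IsMarkovKernel Q]

omit [IsMarkovKernel Q] in
lemma ae_start [MeasurableSingletonClass 𝕏] (hchain : IsMarkovChainLaw Pr Q) (x : 𝕏) :
    ∀ᵐ ω ∂(Pr x), ω 0 = x := by
  have hm : MeasurableSet {ω : ℕ → 𝕏 | ω 0 = x} :=
    (measurable_pi_apply 0 : Measurable fun ω : ℕ → 𝕏 => ω 0) (measurableSet_singleton x)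
  exact (prob_compl_eq_zero_iff hm).2 (hchain.start x)

lemma shift_mem_pathSigma {n : ℕ} {B : Set (ℕ → 𝕏)} (hB : MeasurableSet[pathSigma 𝕏 n] B) :
    MeasurableSet[pathSigma 𝕏 (n + 1)] (pathShift ⁻¹' B) := by
  have : @Measurable _ _ (pathSigma 𝕏 (n + 1)) (pathSigma 𝕏 n)
      (pathShift : (ℕ → 𝕏) → ℕ → 𝕏) := by
    rw [measurable_iff_comap_le, pathSigma, MeasurableSpace.comap_iSup]
    refine iSup_le fun i => ?_
    rw [MeasurableSpace.comap_iSup]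
    refine iSup_le fun hi => ?_
    rw [MeasurableSpace.comap_comp]
    exact comap_le_pathSigma (Finset.mem_range.1 hi)
  exact this hB

/-- Markov property at time one: the path shifted by one step has the law of the chain
started from a point drawn from `Q x`. -/
lemma map_pathShift [MeasurableSingletonClass 𝕏] (hchain : IsMarkovChainLaw Pr Q) (x : 𝕏) :
    (Pr x).map pathShift = (Pr ∘ₖ Q) x := by
  have : IsProbabilityMeasure ((Pr x).map pathShift) :=
    Measure.isProbabilityMeasure_map measurable_pathShift.aemeasurable
  have h0 : ∀ A : Set 𝕏, MeasurableSet A → MeasurableSet {ω : ℕ → 𝕏 | ω 0 ∈ A} :=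
    fun A hA => measurable_pi_apply 0 hA
  refine markov_law_unique Q _ _ (fun A hA => ?_) (fun n B hB A hA => ?_) (fun n B hB A hA => ?_)
  · rw [Measure.map_apply measurable_pathShift (h0 A hA), Kernel.comp_apply' _ _ _ (h0 A hA)]
    have h1 := hchain.markov x 0 univ MeasurableSet.univ A hA
    rw [univ_inter, Measure.restrict_univ] at h1
    change Pr x {ω | ω (0 + 1) ∈ A} = _
    rw [h1, lintegral_congr_ae (g := fun _ => Q x A)
      (by filter_upwards [ae_start hchain x] with ω hω; rw [hω])]
    have h2 : ∀ z, Pr z {ω | ω 0 ∈ A} = A.indicator 1 z := by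
      intro z
      by_cases hz : z ∈ A
      · rw [indicator_of_mem hz, Pi.one_apply, ← prob_compl_eq_zero_iff (h0 A hA)]
        filter_upwards [ae_start hchain z] with ω hω
        simpa [hω] using hz
      · rw [indicator_of_notMem hz, ← compl_compl {ω : ℕ → 𝕏 | ω 0 ∈ A}]
        filter_upwards [ae_start hchain z] with ω hω
        simpa [hω] using hz
    simp [h2, lintegral_indicator_one hA]
  · have hBm := pathSigma_le n _ hB
    have hAm : MeasurableSet {ω : ℕ → 𝕏 | ω (n + 1) ∈ A} := measurable_pi_apply (n + 1) hA
    have hg : Measurable fun ω : ℕ → 𝕏 => Q (ω n) A :=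
      (Kernel.measurable_coe Q hA).comp (measurable_pi_apply n)
    rw [Measure.map_apply measurable_pathShift (hBm.inter hAm),
      setLIntegral_map hBm hg measurable_pathShift]
    exact hchain.markov x (n + 1) _ (shift_mem_pathSigma hB) A hA
  · have hBm := pathSigma_le n _ hB
    have hAm : MeasurableSet {ω : ℕ → 𝕏 | ω (n + 1) ∈ A} := measurable_pi_apply (n + 1) hA
    have hg : Measurable fun ω : ℕ → 𝕏 => Q (ω n) A :=
      (Kernel.measurable_coe Q hA).comp (measurable_pi_apply n)
    rw [Kernel.comp_apply' _ _ _ (hBm.inter hAm), ← lintegral_indicator hBm,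
      Kernel.lintegral_comp _ _ _ (hg.indicator hBm)]
    refine lintegral_congr fun z => ?_
    rw [lintegral_indicator hBm, hchain.markov z n B hB A hA]

end MarkovShift

/-! ### Hitting times and discounted payoffs -/

section Payoff

variable {𝕏 : Type*}

lemma hitTime_eq_coe_iff (S : Set 𝕏) (ω : ℕ → 𝕏) (n : ℕ) :
    hitTime S ω = n ↔ 1 ≤ n ∧ ω n ∈ S ∧ ∀ t, 1 ≤ t → t < n → ω t ∉ S := by
  constructor
  · intro h
    have hne : {n : ℕ∞ | ∃ t : ℕ, n = (t : ℕ∞) ∧ 1 ≤ t ∧ ω t ∈ S}.Nonempty := by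
      by_contra hne
      rw [not_nonempty_iff_eq_empty] at hne
      rw [hitTime, hne, sInf_empty] at h
      exact ENat.top_ne_natCast n h
    have hmem := csInf_mem hne
    rw [← hitTime, h] at hmem
    obtain ⟨t, ht, h1, h2⟩ := hmem
    obtain rfl : n = t := by exact_mod_cast ht
    refine ⟨h1, h2, fun t ht htn hS => ?_⟩
    have : hitTime S ω ≤ t := sInf_le ⟨t, rfl, ht, hS⟩
    rw [h] at this
    have : n ≤ t := by exact_mod_cast this
    omega
  · rintro ⟨h1, h2, h3⟩
    refine le_antisymm (sInf_le ⟨n, rfl, h1, h2⟩) (le_sInf ?_)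
    rintro _ ⟨t, rfl, ht, hS⟩
    by_contra! hlt
    exact h3 t ht (by exact_mod_cast hlt) hS

lemma hitTime_eq_top_iff (S : Set 𝕏) (ω : ℕ → 𝕏) :
    hitTime S ω = ⊤ ↔ ∀ t, 1 ≤ t → ω t ∉ S := by
  rw [hitTime, sInf_eq_top]
  constructor
  · intro h t ht hS
    exact ENat.natCast_ne_top t (h t ⟨t, rfl, ht, hS⟩)
  · rintro h _ ⟨t, rfl, ht, hS⟩
    exact absurd hS (h t ht)

lemma stopPayoff_of_eq_coe (δ : ℕ → ℝ) (f : 𝕏 → ℝ) {S : Set 𝕏} {ω : ℕ → 𝕏} {n : ℕ}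
    (h : hitTime S ω = n) : stopPayoff δ f S ω = δ n * f (ω n) := by
  simp [stopPayoff, h]

lemma stopPayoff_of_eq_top (δ : ℕ → ℝ) (f : 𝕏 → ℝ) {S : Set 𝕏} {ω : ℕ → 𝕏}
    (h : hitTime S ω = ⊤) : stopPayoff δ f S ω = 0 := by
  simp [stopPayoff, h]

/-- First-step decomposition of the payoff: `S` is either hit at time one, or the hitting
time is one plus that of the shifted path. -/
lemma stopPayoff_step (δ : ℕ → ℝ) (f : 𝕏 → ℝ) (S : Set 𝕏) (ω : ℕ → 𝕏) [Decidable (ω 1 ∈ S)] :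
    stopPayoff δ f S ω = if ω 1 ∈ S then δ 1 * f (ω 1)
      else stopPayoff (fun k => δ (k + 1)) f S (pathShift ω) := by
  split_ifs with h
  · refine stopPayoff_of_eq_coe δ f ((hitTime_eq_coe_iff S ω 1).2 ⟨le_rfl, h, ?_⟩)
    intro t h1 h2
    omega
  · rcases eq_or_ne (hitTime S (pathShift ω)) ⊤ with ht | ht
    · rw [stopPayoff_of_eq_top _ f ht]
      refine stopPayoff_of_eq_top δ f ((hitTime_eq_top_iff S ω).2 fun t h1 => ?_)
      obtain ⟨t, rfl⟩ := Nat.exists_eq_add_of_le' h1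
      rcases Nat.eq_zero_or_pos t with rfl | h0
      · exact h
      · exact (hitTime_eq_top_iff _ _).1 ht t h0
    · obtain ⟨n, hn⟩ := ENat.ne_top_iff_exists.1 ht
      rw [stopPayoff_of_eq_coe _ f hn.symm]
      obtain ⟨h1, h2, h3⟩ := (hitTime_eq_coe_iff _ _ _).1 hn.symm
      refine stopPayoff_of_eq_coe δ f ((hitTime_eq_coe_iff S ω (n + 1)).2
        ⟨by omega, h2, fun t ht1 ht2 => ?_⟩)
      obtain ⟨t, rfl⟩ := Nat.exists_eq_add_of_le' ht1
      rcases Nat.eq_zero_or_pos t with rfl | h0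
      · exact h
      · exact h3 t h0 (by omega)

/-- The hitting time along a fixed path does not depend on the discount function, so payoffs
under different discount functions are compared at a common time `n`. -/
lemma stopPayoff_cases (f : 𝕏 → ℝ) (S : Set 𝕏) (ω : ℕ → 𝕏) :
    (∀ δ' : ℕ → ℝ, stopPayoff δ' f S ω = 0) ∨
      ∃ n, ∀ δ' : ℕ → ℝ, stopPayoff δ' f S ω = δ' n * f (ω n) := by
  rcases eq_or_ne (hitTime S ω) ⊤ with ht | ht
  · exact Or.inl fun δ' => stopPayoff_of_eq_top δ' f ht
  · obtain ⟨n, hn⟩ := ENat.ne_top_iff_exists.1 ht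
    exact Or.inr ⟨n, fun δ' => stopPayoff_of_eq_coe δ' f hn.symm⟩

variable [MeasurableSpace 𝕏]

lemma measurable_hitTime {S : Set 𝕏} (hS : MeasurableSet S) :
    Measurable (hitTime S : (ℕ → 𝕏) → ℕ∞) := by
  refine measurable_to_countable' fun n => ?_
  have hm : ∀ t : ℕ, MeasurableSet {ω : ℕ → 𝕏 | ω t ∉ S} :=
    fun t => (measurable_pi_apply t : Measurable fun ω : ℕ → 𝕏 => ω t) hS.compl
  induction n using ENat.recTopCoe with
  | top =>
    have : hitTime S ⁻¹' {⊤} = ⋂ t : ℕ, ⋂ _ : 1 ≤ t, {ω : ℕ → 𝕏 | ω t ∉ S} := by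
      ext ω
      simp [hitTime_eq_top_iff]
    rw [this]
    exact MeasurableSet.iInter fun t => MeasurableSet.iInter fun _ => hm t
  | coe n =>
    have : hitTime S ⁻¹' {(n : ℕ∞)} = {ω : ℕ → 𝕏 | 1 ≤ n} ∩ ({ω : ℕ → 𝕏 | ω n ∈ S} ∩
        ⋂ t : ℕ, ⋂ _ : 1 ≤ t, ⋂ _ : t < n, {ω : ℕ → 𝕏 | ω t ∉ S}) := by
      ext ω
      simp [hitTime_eq_coe_iff]
    rw [this]
    exact (MeasurableSet.const _).inter ((measurable_pi_apply n hS).inter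
      (MeasurableSet.iInter fun t => MeasurableSet.iInter fun _ => MeasurableSet.iInter fun _ =>
        hm t))

lemma measurable_stopPayoff (δ : ℕ → ℝ) {f : 𝕏 → ℝ} (hf : Measurable f) {S : Set 𝕏}
    (hS : MeasurableSet S) : Measurable (stopPayoff δ f S) := by
  have hF : Measurable fun p : ℕ∞ × (ℕ → 𝕏) =>
      if p.1 = ⊤ then (0 : ℝ) else δ p.1.toNat * f (p.2 p.1.toNat) := by
    refine measurable_from_prod_countable_right fun n => ?_
    by_cases hn : n = ⊤
    · simp [hn]
    · simp only [hn, if_false]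
      exact (hf.comp (measurable_pi_apply _)).const_mul _
  exact hF.comp ((measurable_hitTime hS).prodMk measurable_id)

end Payoff

/-! ### One-step analysis of the objective and the comparison principle -/

section Objective

variable {𝕏 : Type*} [MeasurableSpace 𝕏]
  {Pr : Kernel 𝕏 (ℕ → 𝕏)} [IsMarkovKernel Pr] {f : 𝕏 → ℝ} {C : ℝ}

omit [MeasurableSpace 𝕏] in
lemma abs_stopPayoff_le {δ : ℕ → ℝ} {a : ℝ} (hf : ∀ x, |f x| ≤ C) (hδ : ∀ k, |δ k| ≤ a)
    (S : Set 𝕏) (ω : ℕ → 𝕏) : |stopPayoff δ f S ω| ≤ a * C := by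
  have ha : 0 ≤ a := (abs_nonneg _).trans (hδ 0)
  have hC : 0 ≤ C := (abs_nonneg _).trans (hf (ω 0))
  rcases stopPayoff_cases f S ω with h | ⟨n, h⟩
  · rw [h, abs_zero]
    positivity
  · rw [h, abs_mul]
    exact mul_le_mul (hδ n) (hf _) (abs_nonneg _) ha

lemma integrable_stopPayoff {δ : ℕ → ℝ} {a : ℝ} (hfm : Measurable f) (hf : ∀ x, |f x| ≤ C)
    (hδ : ∀ k, |δ k| ≤ a) {S : Set 𝕏} (hS : MeasurableSet S) (μ : Measure (ℕ → 𝕏))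
    [IsFiniteMeasure μ] : Integrable (stopPayoff δ f S) μ :=
  Integrable.of_bound (measurable_stopPayoff δ hfm hS).aestronglyMeasurable (a * C)
    (Eventually.of_forall fun ω => by
      rw [Real.norm_eq_abs]; exact abs_stopPayoff_le hf hδ S ω)

lemma abs_valJ_le {δ : ℕ → ℝ} {a : ℝ} (hf : ∀ x, |f x| ≤ C)
    (hδ : ∀ k, |δ k| ≤ a) (S : Set 𝕏) (x : 𝕏) : |valJ Pr δ f S x| ≤ a * C := by
  have := norm_integral_le_of_norm_le_const (μ := Pr x)
    (f := stopPayoff δ f S) (C := a * C)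
    (Eventually.of_forall fun ω => abs_stopPayoff_le hf hδ S ω)
  simpa [valJ] using this

omit [IsMarkovKernel Pr] in
lemma measurable_valJ (δ : ℕ → ℝ) (hfm : Measurable f) {S : Set 𝕏} (hS : MeasurableSet S) :
    Measurable (valJ Pr δ f S) :=
  (measurable_stopPayoff δ hfm hS).stronglyMeasurable.integral_kernel.measurable

/-- The value one step ahead: stop with payoff `δ 1 * f z` if the next state `z` lies in `S`,
otherwise continue with the discount function advanced by one. -/
def nextVal (Pr : Kernel 𝕏 (ℕ → 𝕏)) (δ : ℕ → ℝ) (f : 𝕏 → ℝ) (S : Set 𝕏) (z : 𝕏) : ℝ :=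
  open Classical in
  if z ∈ S then δ 1 * f z else valJ Pr (fun k => δ (k + 1)) f S z

omit [IsMarkovKernel Pr] in
lemma measurable_nextVal (δ : ℕ → ℝ) (hfm : Measurable f) {S : Set 𝕏} (hS : MeasurableSet S) :
    Measurable (nextVal Pr δ f S) := by
  classical
  unfold nextVal
  exact Measurable.ite hS (hfm.const_mul _) (measurable_valJ _ hfm hS)

lemma abs_nextVal_le {δ : ℕ → ℝ} {a : ℝ} (hf : ∀ x, |f x| ≤ C)
    (hδ : ∀ k, |δ k| ≤ a) (S : Set 𝕏) (z : 𝕏) : |nextVal Pr δ f S z| ≤ a * C := by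
  unfold nextVal
  split_ifs with h
  · rw [abs_mul]
    exact mul_le_mul (hδ 1) (hf _) (abs_nonneg _) ((abs_nonneg _).trans (hδ 0))
  · exact abs_valJ_le hf (fun k => hδ (k + 1)) S z

/-- First-step analysis; in particular `J(·, ρ(·,S))` is the image under `Q` of a bounded
measurable function. -/
lemma valJ_eq_integral_nextVal [MeasurableSingletonClass 𝕏] {Q : Kernel 𝕏 𝕏} [IsMarkovKernel Q]
    (hchain : IsMarkovChainLaw Pr Q) {δ : ℕ → ℝ} {a : ℝ} (hfm : Measurable f)
    (hf : ∀ x, |f x| ≤ C) (hδ : ∀ k, |δ k| ≤ a) {S : Set 𝕏} (hS : MeasurableSet S) (x : 𝕏) :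
    valJ Pr δ f S x = ∫ z, nextVal Pr δ f S z ∂(Q x) := by
  classical
  set H : (ℕ → 𝕏) → ℝ := fun ω => if ω 0 ∈ S then δ 1 * f (ω 0)
    else stopPayoff (fun k => δ (k + 1)) f S ω with hH
  have hHm : Measurable H := Measurable.ite (measurable_pi_apply 0 hS)
    ((hfm.comp (measurable_pi_apply 0)).const_mul _) (measurable_stopPayoff _ hfm hS)
  have hHb : ∀ ω, ‖H ω‖ ≤ a * C := by
    intro ω
    simp only [hH, Real.norm_eq_abs]
    split_ifs with h
    · rw [abs_mul]
      exact mul_le_mul (hδ 1) (hf _) (abs_nonneg _) ((abs_nonneg _).trans (hδ 0))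
    · exact abs_stopPayoff_le hf (fun k => hδ (k + 1)) S ω
  have h1 : valJ Pr δ f S x = ∫ ω, H (pathShift ω) ∂(Pr x) :=
    integral_congr_ae (Eventually.of_forall fun ω => stopPayoff_step δ f S ω)
  rw [h1, ← integral_map measurable_pathShift.aemeasurable hHm.aestronglyMeasurable,
    map_pathShift hchain, Kernel.integral_comp
      (Integrable.of_bound hHm.aestronglyMeasurable _ (Eventually.of_forall hHb))]
  refine integral_congr_ae (Eventually.of_forall fun z => ?_)
  simp only [nextVal]
  split_ifs with hz
  · rw [integral_congr_ae (g := fun _ => δ 1 * f z)]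
    · simp
    · filter_upwards [ae_start hchain z] with ω hω
      simp [hH, hω, hz]
  · refine integral_congr_ae ?_
    filter_upwards [ae_start hchain z] with ω hω
    simp [hH, hω, hz]

/-- Log-superadditivity of the discount function: once `s` units of time have elapsed, the
actual remaining objective dominates `δ s` times the objective of a fresh start. -/
lemma mul_valJ_le {δ : ℕ → ℝ} (hδ : ∀ k, |δ k| ≤ 1) (hDI : ∀ i j : ℕ, δ i * δ j ≤ δ (i + j))
    (hfm : Measurable f) (hf : ∀ x, |f x| ≤ C) (hf0 : ∀ x, 0 ≤ f x)
    {S : Set 𝕏} (hS : MeasurableSet S) (s : ℕ) (x : 𝕏) :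
    δ s * valJ Pr δ f S x ≤ valJ Pr (fun k => δ (s + k)) f S x := by
  rw [valJ, ← integral_const_mul]
  refine integral_mono ((integrable_stopPayoff hfm hf hδ hS _).const_mul _)
    (integrable_stopPayoff hfm hf (fun k => hδ (s + k)) hS _) fun ω => ?_
  rcases stopPayoff_cases f S ω with h | ⟨n, h⟩
  · simp [h]
  · simp only [h]
    rw [← mul_assoc]
    exact mul_le_mul_of_nonneg_right (hDI s n) (hf0 _)

/-- Comparison principle. Let `U` lie in every member of a family `𝓕` of Borel sets, and suppose
that outside `U` some member of `𝓕` makes continuing strictly better than stopping. Then `U` is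
at least as good as every member of `𝓕`. Since at least one unit of time elapses at each
re-decision, the excess of `J(·, S)` over `J(·, U)` at elapsed time `t` is at most `C * δ (t + k)`
for every `k`, by induction on `k`. -/
lemma valJ_le_of_family [MeasurableSingletonClass 𝕏] {Q : Kernel 𝕏 𝕏} [IsMarkovKernel Q]
    (hchain : IsMarkovChainLaw Pr Q) {δ : ℕ → ℝ} (hδ0 : ∀ k, 0 ≤ δ k) (hδ1 : ∀ k, δ k ≤ 1)
    (hanti : Antitone δ) (hlim : Tendsto δ atTop (𝓝 0))
    (hDI : ∀ i j : ℕ, δ i * δ j ≤ δ (i + j))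
    (hfm : Measurable f) (hf : ∀ x, f x ≤ C) (hf0 : ∀ x, 0 ≤ f x)
    (𝓕 : Set (Set 𝕏)) (h𝓕 : ∀ S ∈ 𝓕, MeasurableSet S) {U : Set 𝕏} (hU : MeasurableSet U)
    (hsub : ∀ S ∈ 𝓕, U ⊆ S) (hout : ∀ z, z ∉ U → ∃ S ∈ 𝓕, f z < valJ Pr δ f S z)
    {S : Set 𝕏} (hS : S ∈ 𝓕) (x : 𝕏) :
    valJ Pr δ f S x ≤ valJ Pr δ f U x := by
  have hfa : ∀ x, |f x| ≤ C := fun x => by rw [abs_of_nonneg (hf0 x)]; exact hf x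
  have hC : 0 ≤ C := (hf0 x).trans (hf x)
  have hδa : ∀ k, |δ k| ≤ 1 := fun k => by rw [abs_of_nonneg (hδ0 k)]; exact hδ1 k
  have hδt : ∀ t k, |δ (t + k)| ≤ δ t := fun t k => by
    rw [abs_of_nonneg (hδ0 _)]; exact hanti (Nat.le_add_right t k)
  have hδs : ∀ t k, |δ (t + k)| ≤ 1 := fun t k => hδa _
  have key : ∀ k t : ℕ, ∀ S ∈ 𝓕, ∀ y,
      valJ Pr (fun i => δ (t + i)) f S y ≤ valJ Pr (fun i => δ (t + i)) f U y + δ (t + k) * C := by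
    intro k
    induction k with
    | zero =>
      intro t S _ y
      have h1 := le_of_abs_le (abs_valJ_le (Pr := Pr) hfa (hδt t) S y)
      have h2 : 0 ≤ valJ Pr (fun i => δ (t + i)) f U y := by
        refine integral_nonneg fun ω => ?_
        rcases stopPayoff_cases f U ω with h | ⟨n, h⟩
        · rw [h]
          exact le_rfl
        · rw [h]
          exact mul_nonneg (hδ0 _) (hf0 _)
      rw [add_zero]
      linarith
    | succ k ih =>
      intro t S hS y
      have hadv : (fun i => δ (t + (i + 1))) = fun i => δ (t + 1 + i) := by
        funext i
        congr 1
        omega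
      have hb : ∀ T : Set 𝕏, MeasurableSet T →
          Integrable (nextVal Pr (fun i => δ (t + i)) f T) (Q y) := fun T hT =>
        Integrable.of_bound (measurable_nextVal _ hfm hT).aestronglyMeasurable (1 * C)
          (Eventually.of_forall fun z => abs_nextVal_le hfa (hδs t) T z)
      rw [valJ_eq_integral_nextVal hchain hfm hfa (hδs t) (h𝓕 S hS),
        valJ_eq_integral_nextVal hchain hfm hfa (hδs t) hU]
      have hc : δ (t + (k + 1)) * C = ∫ _, δ (t + (k + 1)) * C ∂(Q y) := by simp
      rw [hc, ← integral_add (hb U hU) (integrable_const _)]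
      refine integral_mono (hb S (h𝓕 S hS)) ((hb U hU).add (integrable_const _)) fun z => ?_
      have hk : δ (t + (k + 1)) = δ (t + 1 + k) := by congr 1; omega
      have hnn : 0 ≤ δ (t + 1 + k) * C := mul_nonneg (hδ0 _) hC
      simp only [nextVal, hadv, hk]
      by_cases hzU : z ∈ U
      · rw [if_pos hzU, if_pos (hsub S hS hzU)]
        linarith
      · rw [if_neg hzU]
        split_ifs with hzS
        · -- `S` would stop at `z`, but some member of the family makes waiting preferable there.
          obtain ⟨S', hS', hlt⟩ := hout z hzU
          calc δ (t + 1) * f z ≤ δ (t + 1) * valJ Pr δ f S' z :=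
                mul_le_mul_of_nonneg_left hlt.le (hδ0 _)
            _ ≤ valJ Pr (fun i => δ (t + 1 + i)) f S' z :=
                mul_valJ_le hδa hDI hfm hfa hf0 (h𝓕 S' hS') (t + 1) z
            _ ≤ _ := ih (t + 1) S' hS' z
        · exact ih (t + 1) S hS z
  have hlim' : Tendsto (fun k => valJ Pr δ f U x + δ k * C) atTop
      (𝓝 (valJ Pr δ f U x + 0 * C)) := (hlim.mul_const C).const_add _
  rw [zero_mul, add_zero] at hlim'
  refine ge_of_tendsto' hlim' fun k => ?_
  simpa using key k 0 S hS x

end Objective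

/-! ### Semicontinuity and measurability of intersections -/

section Topological

variable {𝕏 : Type*} [TopologicalSpace 𝕏] [PolishSpace 𝕏] [MeasurableSpace 𝕏] [BorelSpace 𝕏]

omit [BorelSpace 𝕏] in
lemma isOpen_lt_integral {Q : Kernel 𝕏 𝕏} [IsMarkovKernel Q]
    (hQ_lsc : ∀ g : 𝕏 → ℝ, Measurable g → (∃ C : ℝ, ∀ y, |g y| ≤ C) →
      ∀ (x : 𝕏) (xs : ℕ → 𝕏), Tendsto xs atTop (𝓝 x) →
        ∫ y, g y ∂(Q x) ≤ Filter.liminf (fun n => ∫ y, g y ∂(Q (xs n))) atTop)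
    {g : 𝕏 → ℝ} (hg : Measurable g) {C : ℝ} (hC : ∀ y, |g y| ≤ C) (q : ℝ) :
    IsOpen {x | q < ∫ y, g y ∂(Q x)} := by
  rw [← isClosed_compl_iff]
  refine IsSeqClosed.isClosed fun xs x hxs hx => ?_
  simp only [mem_compl_iff, mem_ofPred_eq, not_lt] at hxs ⊢
  refine (hQ_lsc g hg ⟨C, hC⟩ x xs hx).trans ?_
  refine liminf_le_of_frequently_le (Frequently.of_forall hxs) ?_
  refine isBoundedUnder_of ⟨-C, fun n => ?_⟩
  have := norm_integral_le_of_norm_le_const (μ := Q (xs n)) (f := g) (C := C)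
    (Eventually.of_forall fun y => by rw [Real.norm_eq_abs]; exact hC y)
  simp only [Real.norm_eq_abs, probReal_univ, mul_one] at this
  exact neg_le_of_abs_le this

omit [PolishSpace 𝕏] in
/-- An arbitrary, possibly uncountable, intersection of superlevel sets `{f ≥ J_i}` is Borel
as soon as the `J_i` are lower semicontinuous: its complement is the countable union over
rational `q` of `{f < q} ∩ ⋃ i, {J_i > q}`. -/
lemma measurableSet_setOf_forall_le {ι : Type*} (I : Set ι) {f : 𝕏 → ℝ} (hf : Measurable f)
    (J : ι → 𝕏 → ℝ) (hJ : ∀ i ∈ I, ∀ q : ℝ, IsOpen {x | q < J i x}) :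
    MeasurableSet {x | ∀ i ∈ I, J i x ≤ f x} := by
  rw [← MeasurableSet.compl_iff]
  have : {x | ∀ i ∈ I, J i x ≤ f x}ᶜ =
      ⋃ q : ℚ, ({x | f x < q} ∩ ⋃ i ∈ I, {x | (q : ℝ) < J i x}) := by
    ext x
    simp only [mem_compl_iff, mem_ofPred_eq, not_forall, not_le, mem_iUnion, mem_inter_iff,
      exists_prop]
    constructor
    · rintro ⟨i, hi, h⟩
      obtain ⟨q, h1, h2⟩ := exists_rat_btwn h
      exact ⟨q, h1, i, hi, h2⟩
    · rintro ⟨q, h1, i, hi, h2⟩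
      exact ⟨i, hi, h1.trans h2⟩
  rw [this]
  exact MeasurableSet.iUnion fun q => (measurableSet_lt hf measurable_const).inter
    (isOpen_biUnion fun i hi => hJ i hi q).measurableSet

end Topological

/-- Under decreasing impatience, lower semicontinuity of `f` and lower
semicontinuity of the kernel `Q` under the weak star topology,
`S* = ⋂_{S ∈ ℰ} S` is the optimal equilibrium. -/
theorem optimal_equilibrium_exists_lsc
    {𝕏 : Type*} [TopologicalSpace 𝕏] [PolishSpace 𝕏] [MeasurableSpace 𝕏] [BorelSpace 𝕏]
    (Pr : Kernel 𝕏 (ℕ → 𝕏)) [IsMarkovKernel Pr] (Q : Kernel 𝕏 𝕏) [IsMarkovKernel Q]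
    (hchain : IsMarkovChainLaw Pr Q)
    (f : 𝕏 → ℝ) (hf_meas : Measurable f) (hf_nonneg : ∀ x, 0 ≤ f x)
    (hf_bdd : ∃ C : ℝ, ∀ x, f x ≤ C)
    (δ : ℕ → ℝ) (hδ_mem : ∀ k, δ k ∈ Set.Icc (0 : ℝ) 1) (hδ_anti : StrictAnti δ)
    (hδ_zero : δ 0 = 1) (hδ_lim : Tendsto δ atTop (𝓝 0))
    (hDI : ∀ i j : ℕ, δ i * δ j ≤ δ (i + j))
    (hf_usc : LowerSemicontinuous f)
    (hQ_lsc : ∀ g : 𝕏 → ℝ, Measurable g → (∃ C : ℝ, ∀ y, |g y| ≤ C) →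
      ∀ (x : 𝕏) (xs : ℕ → 𝕏), Tendsto xs atTop (𝓝 x) →
        ∫ y, g y ∂(Q x) ≤ Filter.liminf (fun n => ∫ y, g y ∂(Q (xs n))) atTop)
 :
    IsEquilibrium Pr δ f (⋂₀ {S : Set 𝕏 | IsEquilibrium Pr δ f S}) ∧
    ∀ S : Set 𝕏, IsEquilibrium Pr δ f S → ∀ x : 𝕏,
      valV Pr δ f S x ≤ valV Pr δ f (⋂₀ {S : Set 𝕏 | IsEquilibrium Pr δ f S}) x := by
  have hδ0 : ∀ k, 0 ≤ δ k := fun k => (hδ_mem k).1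
  have hδ1 : ∀ k, δ k ≤ 1 := fun k => (hδ_mem k).2
  have hδa : ∀ k, |δ k| ≤ 1 := fun k => by rw [abs_of_nonneg (hδ0 k)]; exact hδ1 k
  obtain ⟨C, hC⟩ := hf_bdd
  have hfa : ∀ x, |f x| ≤ C := fun x => by rw [abs_of_nonneg (hf_nonneg x)]; exact hC x
  have comparison := fun (𝓕 : Set (Set 𝕏)) h𝓕 (U : Set 𝕏) hU hsub hout (S : Set 𝕏) hS x =>
    valJ_le_of_family hchain hδ0 hδ1 hδ_anti.antitone hδ_lim hDI hf_meas hC hf_nonneg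
      𝓕 h𝓕 (U := U) hU hsub hout (S := S) hS x
  have hΘm : ∀ T : Set 𝕏, MeasurableSet T → MeasurableSet (Θ Pr δ f T) := fun T hT =>
    measurableSet_le (measurable_valJ δ hf_meas hT) hf_meas
  set 𝓖 : Set (Set 𝕏) := {T | MeasurableSet T ∧ Θ Pr δ f T ⊆ T} with h𝓖
  have hΘ𝓖 : ∀ T ∈ 𝓖, Θ Pr δ f T ∈ 𝓖 := by
    rintro T ⟨hT, hsub⟩
    refine ⟨hΘm T hT, fun x hx => ?_⟩
    refine (comparison {T} (by simpa using hT) (Θ Pr δ f T) (hΘm T hT) (by simpa using hsub)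
      (fun z hz => ⟨T, rfl, not_le.1 hz⟩) T rfl x).trans hx
  set U : Set 𝕏 := {x | ∀ T ∈ 𝓖, valJ Pr δ f T x ≤ f x} with hUdef
  have hUm : MeasurableSet U := by
    refine measurableSet_setOf_forall_le 𝓖 hf_meas (fun T => valJ Pr δ f T) fun T hT q => ?_
    simp only [valJ_eq_integral_nextVal hchain hf_meas hfa hδa hT.1]
    exact isOpen_lt_integral hQ_lsc (measurable_nextVal δ hf_meas hT.1)
      (fun z => abs_nextVal_le hfa hδa T z) q
  have hUsub : ∀ T ∈ 𝓖, U ⊆ T := fun T hT x hx => hT.2 (hx T hT)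
  have hUbest : ∀ T ∈ 𝓖, ∀ x, valJ Pr δ f T x ≤ valJ Pr δ f U x := fun T hT x =>
    comparison 𝓖 (fun T hT => hT.1) U hUm hUsub
      (fun z hz => by simpa [hUdef] using hz) T hT x
  have hU𝓖 : U ∈ 𝓖 := ⟨hUm, fun x hx T hT => (hUbest T hT x).trans hx⟩
  have hUeq : IsEquilibrium Pr δ f U := ⟨hUm, hU𝓖.2.antisymm (hUsub _ (hΘ𝓖 U hU𝓖))⟩
  have hℰ𝓖 : ∀ S, IsEquilibrium Pr δ f S → S ∈ 𝓖 := fun S hS => ⟨hS.1, hS.2.subset⟩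
  have hinter : ⋂₀ {S : Set 𝕏 | IsEquilibrium Pr δ f S} = U :=
    (sInter_subset_of_mem hUeq).antisymm (subset_sInter fun S hS => hUsub S (hℰ𝓖 S hS))
  rw [hinter]
  exact ⟨hUeq, fun S hS x => max_le_max le_rfl (hUbest S (hℰ𝓖 S hS) x)⟩

end
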